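/- If every n-vertex graph of a monotone graph class C has a balanced separator of order at most C₀·n^{1−δ} (with C₀ > 0, 0 < δ ≤ 1), then there exist constants c₁, c₂ depending only on C₀ and δ such that for every integer r ≥ 0, every depth-r minor of a graph in C has average degree at most c₁·(r+1)^{1/δ}·((1/δ)·log(r+3))^{c₂/δ}. -/

import Mathlib

open Finset

/-- The external neighborhood of a vertex set `S`. -/
def nbrSet {V : Type*} (G : SimpleGraph V) (S : Set V) : Set V :=
  {v | v ∉ S ∧ ∃ u ∈ S, G.Adj u v}

/-- `(A, B)` is a separator of `G`: `A ∪ B = V` and no edge joins `A \ B` to `B \ A`. -/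
def IsSeparator {V : Type*} [Fintype V] [DecidableEq V] (G : SimpleGraph V) (A B : Finset V) : Prop :=
  A ∪ B = Finset.univ ∧ ∀ a ∈ A \ B, ∀ b ∈ B \ A, ¬ G.Adj a b

/-- A balanced separator: moreover `|A \ B|` and `|B \ A|` are at most `(2/3)|V|`. -/
def IsBalancedSeparator {V : Type*} [Fintype V] [DecidableEq V] (G : SimpleGraph V) (A B : Finset V) : Prop :=
  IsSeparator G A B ∧ 3 * (A \ B).card ≤ 2 * Fintype.card V ∧
    3 * (B \ A).card ≤ 2 * Fintype.card V

/-- `G` has a tree decomposition of width at most `k`. -/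
def HasTreeDecompOfWidth {V : Type*} (G : SimpleGraph V) (k : ℕ) : Prop :=
  ∃ (ι : Type) (T : SimpleGraph ι) (β : ι → Finset V),
    T.IsTree ∧
    (∀ v, ∃ i, v ∈ β i) ∧
    (∀ u v, G.Adj u v → ∃ i, u ∈ β i ∧ v ∈ β i) ∧
    (∀ v, (SimpleGraph.induce {i | v ∈ β i} T).Connected) ∧
    (∀ i, (β i).card ≤ k + 1)

/-- The tree-width of `G`. -/
noncomputable def treewidth {V : Type*} (G : SimpleGraph V) : ℕ :=
  sInf {k | HasTreeDecompOfWidth G k}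

/-- A realization of `H` as a depth-`r` minor of `G`: pairwise disjoint branch sets
`S w ⊆ V(G)`, each connected of radius at most `r` (witnessed by a center and walks
staying inside the branch set), such that every edge of `H` is realized by an edge
of `G` between the corresponding branch sets. -/
structure DepthMinorRealization {V W : Type*} (r : ℕ) (G : SimpleGraph V)
    (H : SimpleGraph W) where
  S : W → Set V
  disj : ∀ w w', w ≠ w' → Disjoint (S w) (S w')
  center : W → V
  center_mem : ∀ w, center w ∈ S w
  radius : ∀ w, ∀ v ∈ S w, ∃ p : G.Walk (center w) v, p.length ≤ r ∧
    ∀ x ∈ p.support, x ∈ S w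
  adj : ∀ w w', H.Adj w w' → ∃ a ∈ S w, ∃ b ∈ S w', G.Adj a b

/-- The average degree `2|E|/|V|` of a finite graph. -/
noncomputable def avgDeg {W : Type*} [Fintype W] (H : SimpleGraph W) : ℝ :=
  (∑ w : W, ({w' | H.Adj w w'}.ncard : ℝ)) / (Fintype.card W : ℝ)

/-- `v` is strongly `r`-reachable from `u` with respect to the linear order `L`. -/
def StronglyReachable {V : Type*} (G : SimpleGraph V) (L : LinearOrder V) (r : ℕ)
    (u v : V) : Prop :=
  L.le v u ∧ ∃ p : G.Walk u v, p.IsPath ∧ p.length ≤ r ∧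
    ∀ w ∈ p.support, w ≠ u → w ≠ v → L.lt u w

/-- `v` is weakly `r`-reachable from `u` with respect to the linear order `L`. -/
def WeaklyReachable {V : Type*} (G : SimpleGraph V) (L : LinearOrder V) (r : ℕ)
    (u v : V) : Prop :=
  L.le v u ∧ ∃ p : G.Walk u v, p.IsPath ∧ p.length ≤ r ∧
    ∀ w ∈ p.support, L.le v w

/-- The strong `r`-coloring number of `G`. -/
noncomputable def colNum {V : Type*} [Fintype V] (G : SimpleGraph V) (r : ℕ) : ℕ :=
  sInf {k | ∃ L : LinearOrder V, ∀ u, {v | StronglyReachable G L r u v}.ncard ≤ k}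

/-- The weak `r`-coloring number of `G`. -/
noncomputable def wcolNum {V : Type*} [Fintype V] (G : SimpleGraph V) (r : ℕ) : ℕ :=
  sInf {k | ∃ L : LinearOrder V, ∀ u, {v | WeaklyReachable G L r u v}.ncard ≤ k}

/-- `H` is (isomorphic to) a subgraph of `G`. -/
def IsSubgraphOf {W V : Type*} (H : SimpleGraph W) (G : SimpleGraph V) : Prop :=
  ∃ f : W ↪ V, ∀ a b, H.Adj a b → G.Adj (f a) (f b)

/-!
Weight the edge density with a slowly increasing function of the size, and let `X` be a densest
vertex set of the minor `H`, with `k` vertices. Then `H[X]` expands: a family of sets of size at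
most `k / 2` whose total size is barely more than `k` leaves a fraction `Ω(1 / (log k) ^ 2)` of
the edges inside no member. There are only `exp (O(k log k))` such families, so `Õ(k)`
well-chosen edges meet the uncovered edges of each of them. Those edges are realized in `G` by
disjoint connected models on `Õ(k (r + 1))` vertices in total. Cutting recursively along
separators divides this vertex set into pieces of size at most `k / 2` with little overlap. The
traces of the pieces on the models form a family covering all chosen edges, and its total size
is barely more than `k` because a connected model meets several pieces only where its own
vertices are shared between pieces. This is a contradiction unless `k ≤ Õ((r + 1) ^ (1 / δ))`,
and `k` bounds the density of `X`, hence up to a factor the average degree of `H`.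
-/

section Division

variable {V : Type*} [DecidableEq V] {G : SimpleGraph V} {C₀ δ : ℝ}

/-- Every finite induced subgraph `G[X]` has a balanced separator of order at most
`C₀ * |X| ^ (1 - δ)`. The graph `G` itself may be infinite. -/
def HasSublinearSeparators (G : SimpleGraph V) (C₀ δ : ℝ) : Prop :=
  ∀ X : Finset V, ∃ A B : Finset (X : Set V), IsBalancedSeparator (G.induce (X : Set V)) A B ∧
    (#(A ∩ B) : ℝ) ≤ C₀ * (#X : ℝ) ^ (1 - δ)

/-- `𝒟` is a division of `G[X]`: a family of subsets of `X`, allowed to overlap, such that every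
edge of `G[X]` lies inside some member. -/
structure IsDivision (G : SimpleGraph V) (X : Finset V) (𝒟 : Finset (Finset V)) : Prop where
  subset : ∀ P ∈ 𝒟, P ⊆ X
  exists_mem_of_adj : ∀ u ∈ X, ∀ v ∈ X, G.Adj u v → ∃ P ∈ 𝒟, u ∈ P ∧ v ∈ P

/-- The constant governing the overlap of the divisions obtained from separators of order
`C₀ * n ^ (1 - δ)`. The first summand makes the error term of `divisionBound_add_le` absorb one
separation, the second forces separators of large sets to be small compared to the sets. -/
noncomputable def divisionConst (C₀ δ : ℝ) : ℝ := 2 * C₀ / ((4 / 3) ^ δ - 1) + 12 * C₀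

theorem four_thirds_rpow_sub_one_pos (hδ : 0 < δ) : 0 < (4 / 3 : ℝ) ^ δ - 1 :=
  sub_pos.2 (Real.one_lt_rpow (by norm_num) hδ)

theorem divisionConst_pos (hC₀ : 0 < C₀) (hδ : 0 < δ) : 0 < divisionConst C₀ δ := by
  have := four_thirds_rpow_sub_one_pos hδ
  unfold divisionConst
  positivity

theorem two_mul_le_divisionConst_mul (hC₀ : 0 ≤ C₀) (hδ : 0 < δ) :
    2 * C₀ ≤ divisionConst C₀ δ * ((4 / 3) ^ δ - 1) := by
  have hτ := four_thirds_rpow_sub_one_pos hδ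
  rw [divisionConst, add_mul, div_mul_cancel₀ _ hτ.ne']
  exact le_add_of_nonneg_right (by positivity)

theorem twelve_mul_le_divisionConst (hC₀ : 0 ≤ C₀) (hδ : 0 < δ) :
    12 * C₀ ≤ divisionConst C₀ δ :=
  le_add_of_nonneg_left (div_nonneg (by positivity) (four_thirds_rpow_sub_one_pos hδ).le)

theorem HasSublinearSeparators.exists_separation (h : HasSublinearSeparators G C₀ δ)
    (X : Finset V) :
    ∃ A B : Finset V, A ∪ B = X ∧ (∀ a ∈ A \ B, ∀ b ∈ B \ A, ¬ G.Adj a b) ∧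
      #X ≤ 3 * #A ∧ #X ≤ 3 * #B ∧ (#(A ∩ B) : ℝ) ≤ C₀ * (#X : ℝ) ^ (1 - δ) := by
  obtain ⟨A, B, ⟨⟨hunion, hcross⟩, hA, hB⟩, hAB⟩ := h X
  let val : (X : Set V) ↪ V := Function.Embedding.subtype _
  have hX : A.map val ∪ B.map val = X := by
    rw [← map_union, hunion]
    ext v
    simp [val]
  have hcardX : Fintype.card (X : Set V) = #X := Fintype.card_coe X
  have hcard : #X = #(A ∪ B) := by rw [hunion, card_univ, hcardX]
  have hsdiffA := card_sdiff_add_card A B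
  have hsdiffB := card_sdiff_add_card B A
  rw [union_comm] at hsdiffB
  refine ⟨A.map val, B.map val, hX, ?_, ?_, ?_, ?_⟩
  · simp only [← Finset.map_sdiff, forall_mem_map]
    exact hcross
  · rw [card_map]
    omega
  · rw [card_map]
    omega
  · rwa [← map_inter, card_map]

theorem mul_rpow_one_sub_le {n : ℝ} (hn : 0 < n) (hnC : 12 * C₀ ≤ n ^ δ) :
    12 * (C₀ * n ^ (1 - δ)) ≤ n := by
  rw [Real.rpow_sub hn, Real.rpow_one, ← mul_assoc, mul_div_assoc', div_le_iff₀ (by positivity),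
    mul_comm n]
  exact mul_le_mul_of_nonneg_right hnC hn.le

theorem IsDivision.union {A B : Finset V} {𝒟A 𝒟B : Finset (Finset V)}
    (hcross : ∀ a ∈ A \ B, ∀ b ∈ B \ A, ¬ G.Adj a b)
    (hA : IsDivision G A 𝒟A) (hB : IsDivision G B 𝒟B) : IsDivision G (A ∪ B) (𝒟A ∪ 𝒟B) where
  subset P hP := by
    rcases mem_union.1 hP with hP | hP
    · exact (hA.subset P hP).trans subset_union_left
    · exact (hB.subset P hP).trans subset_union_right
  exists_mem_of_adj u hu v hv huv := by
    have hside : (u ∈ A ∧ v ∈ A) ∨ (u ∈ B ∧ v ∈ B) := by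
      have huv' := hcross u
      have hvu' := hcross v
      simp only [mem_union, mem_sdiff] at *
      grind [G.adj_comm]
    rcases hside with ⟨hu, hv⟩ | ⟨hu, hv⟩
    · obtain ⟨P, hP, h⟩ := hA.exists_mem_of_adj u hu v hv huv
      exact ⟨P, mem_union_left _ hP, h⟩
    · obtain ⟨P, hP, h⟩ := hB.exists_mem_of_adj u hu v hv huv
      exact ⟨P, mem_union_right _ hP, h⟩

/-- The bound on the total size of a division of an `x`-vertex graph into pieces of size `O(t)`. The
term `- 1 / x ^ δ` is the slack that makes the bound superadditive enough to absorb a separation. -/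
noncomputable def divisionBound (C₀ δ t x : ℝ) : ℝ :=
  x * (1 + divisionConst C₀ δ * (1 / t ^ δ - 1 / x ^ δ))

theorem divisionBound_add_le {t n a b z : ℝ} (hC₀ : 0 < C₀) (hδ : 0 < δ) (ht : 0 < t)
    (htM : divisionConst C₀ δ ≤ t ^ δ) (ha : 0 < a) (hb : 0 < b) (hn : 0 < n) (hab : a + b = n + z)
    (haₙ : a ≤ 3 / 4 * n) (hbₙ : b ≤ 3 / 4 * n) (hz : 0 ≤ z) (hzn : z ≤ C₀ * n ^ (1 - δ)) :
    divisionBound C₀ δ t a + divisionBound C₀ δ t b ≤ divisionBound C₀ δ t n := by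
  set M := divisionConst C₀ δ
  set τ : ℝ := (4 / 3) ^ δ
  have hM : 0 < M := divisionConst_pos hC₀ hδ
  have hτ : 1 < τ := sub_pos.1 (four_thirds_rpow_sub_one_pos hδ)
  have hinv {x : ℝ} (hx : 0 < x) (hxn : x ≤ 3 / 4 * n) : τ / n ^ δ ≤ 1 / x ^ δ := by
    rw [div_le_div_iff₀ (by positivity) (by positivity), one_mul,
      ← Real.mul_rpow (by norm_num) hx.le]
    exact Real.rpow_le_rpow (by positivity) (by linarith) hδ.le
  have hpart {x : ℝ} (hx : 0 < x) (hxn : x ≤ 3 / 4 * n) :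
      divisionBound C₀ δ t x ≤ x * (1 + M * (1 / t ^ δ - τ / n ^ δ)) :=
    mul_le_mul_of_nonneg_left
      (add_le_add_right (mul_le_mul_of_nonneg_left (sub_le_sub_left (hinv hx hxn) _) hM.le) _) hx.le
  have htδ : M * (1 / t ^ δ) ≤ 1 := by
    rw [mul_one_div]
    exact div_le_one_of_le₀ htM (by positivity)
  have hfactor : 1 + M * (1 / t ^ δ - τ / n ^ δ) ≤ 2 := by
    have : 0 ≤ M * (τ / n ^ δ) := by positivity
    linarith
  have hslack : 2 * z ≤ M * (τ - 1) * (n / n ^ δ) := by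
    rw [Real.rpow_sub hn, Real.rpow_one] at hzn
    calc 2 * z ≤ 2 * C₀ * (n / n ^ δ) := by linarith
      _ ≤ M * (τ - 1) * (n / n ^ δ) :=
        mul_le_mul_of_nonneg_right (two_mul_le_divisionConst_mul hC₀.le hδ) (by positivity)
  calc divisionBound C₀ δ t a + divisionBound C₀ δ t b
      ≤ a * (1 + M * (1 / t ^ δ - τ / n ^ δ)) + b * (1 + M * (1 / t ^ δ - τ / n ^ δ)) :=
        add_le_add (hpart ha haₙ) (hpart hb hbₙ)
    _ = n * (1 + M * (1 / t ^ δ - τ / n ^ δ)) + z * (1 + M * (1 / t ^ δ - τ / n ^ δ)) := by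
        rw [← add_mul, hab, add_mul]
    _ ≤ n * (1 + M * (1 / t ^ δ - τ / n ^ δ)) + M * (τ - 1) * (n / n ^ δ) := by
        have := mul_le_mul_of_nonneg_left hfactor hz
        linarith
    _ = divisionBound C₀ δ t n := by
        unfold divisionBound
        ring

theorem HasSublinearSeparators.exists_division (h : HasSublinearSeparators G C₀ δ) (hC₀ : 0 < C₀)
    (hδ : 0 < δ) {t : ℝ} (ht : 0 < t) (htM : divisionConst C₀ δ ≤ t ^ δ) (X : Finset V)
    (hX : t ≤ #X) :
    ∃ 𝒟, IsDivision G X 𝒟 ∧ (∀ P ∈ 𝒟, (#P : ℝ) ≤ 3 * t) ∧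
      ((∑ P ∈ 𝒟, #P : ℕ) : ℝ) ≤ divisionBound C₀ δ t #X := by
  induction hn : #X using Nat.strong_induction_on generalizing X with | _ n ih =>
  subst hn
  have hXpos : (0 : ℝ) < #X := ht.trans_le hX
  have hpow : t ^ δ ≤ (#X : ℝ) ^ δ := Real.rpow_le_rpow ht.le hX hδ.le
  rcases le_or_gt (#X : ℝ) (3 * t) with hsmall | hlarge
  · refine ⟨{X}, ⟨by simp, by simp +contextual⟩, by simpa, ?_⟩
    have hslack : 0 ≤ divisionConst C₀ δ * (1 / t ^ δ - 1 / (#X : ℝ) ^ δ) :=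
      mul_nonneg (divisionConst_pos hC₀ hδ).le (sub_nonneg.2 (by gcongr))
    rw [sum_singleton]
    exact le_mul_of_one_le_right hXpos.le (by linarith)
  obtain ⟨A, B, hunion, hcross, hA, hB, hz⟩ := h.exists_separation X
  have hzX : 12 * (C₀ * (#X : ℝ) ^ (1 - δ)) ≤ #X :=
    mul_rpow_one_sub_le hXpos ((twelve_mul_le_divisionConst hC₀.le hδ).trans (htM.trans hpow))
  have hcard : #A + #B = #X + #(A ∩ B) := by rw [← hunion, card_union_add_card_inter]
  rify at hA hB hcard
  have hAX : (#A : ℝ) ≤ 3 / 4 * #X := by linarith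
  have hBX : (#B : ℝ) ≤ 3 / 4 * #X := by linarith
  obtain ⟨𝒟A, hdivA, hpieceA, hsumA⟩ := ih #A (by rify; linarith) A (by linarith) rfl
  obtain ⟨𝒟B, hdivB, hpieceB, hsumB⟩ := ih #B (by rify; linarith) B (by linarith) rfl
  refine ⟨𝒟A ∪ 𝒟B, hunion ▸ hdivA.union hcross hdivB,
    fun P hP => (mem_union.1 hP).elim (hpieceA P) (hpieceB P), ?_⟩
  have hsum : ∑ P ∈ 𝒟A ∪ 𝒟B, #P ≤ ∑ P ∈ 𝒟A, #P + ∑ P ∈ 𝒟B, #P := by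
    rw [← sum_union_inter]
    exact Nat.le_add_right _ _
  rify at hsum hsumA hsumB ⊢
  calc ∑ P ∈ 𝒟A ∪ 𝒟B, (#P : ℝ)
      ≤ divisionBound C₀ δ t #A + divisionBound C₀ δ t #B := by linarith
    _ ≤ divisionBound C₀ δ t #X :=
        divisionBound_add_le hC₀ hδ ht htM (by linarith) (by linarith) hXpos hcard hAX hBX
          (by positivity) hz

theorem divisionBound_le {t x : ℝ} (hC₀ : 0 < C₀) (hδ : 0 < δ) (hx : 0 ≤ x) :
    divisionBound C₀ δ t x ≤ x + x * (divisionConst C₀ δ / t ^ δ) := by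
  have hM := divisionConst_pos hC₀ hδ
  have : 0 ≤ x * (divisionConst C₀ δ / x ^ δ) := by positivity
  calc divisionBound C₀ δ t x
      = x + x * (divisionConst C₀ δ / t ^ δ) - x * (divisionConst C₀ δ / x ^ δ) := by
        unfold divisionBound
        ring
    _ ≤ x + x * (divisionConst C₀ δ / t ^ δ) := sub_le_self _ this

end Division

section BranchTrace

variable {V W : Type*} {G : SimpleGraph V}

theorem exists_adj_of_ssubset_of_connected {T Y : Finset V}
    (hT : (G.induce (T : Set V)).Connected) (hY : Y.Nonempty) (hYT : Y ⊂ T) :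
    ∃ u ∈ Y, ∃ v ∈ T, v ∉ Y ∧ G.Adj u v := by
  obtain ⟨a, ha⟩ := hY
  obtain ⟨b, hbT, hbY⟩ := exists_of_ssubset hYT
  obtain ⟨p⟩ := hT.preconnected ⟨a, hYT.1 ha⟩ ⟨b, hbT⟩
  obtain ⟨d, -, hfst, hsnd⟩ := p.exists_boundary_dart {x | x.1 ∈ Y} ha hbY
  exact ⟨d.fst, hfst, d.snd, d.snd.2, hsnd, d.adj⟩

@[elab_as_elim]
theorem connected_finset_induction [DecidableEq V] {T : Finset V}
    (hT : (G.induce (T : Set V)).Connected) {motive : Finset V → Prop}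
    (singleton : ∀ v ∈ T, motive {v})
    (insert : ∀ Y ⊆ T, ∀ u ∈ Y, ∀ v ∈ T, v ∉ Y → G.Adj u v → motive Y → motive (insert v Y)) :
    motive T := by
  classical
  obtain ⟨⟨a, ha⟩⟩ := hT.nonempty
  obtain ⟨Y, hY, hmax⟩ := exists_max_image {Y ∈ T.powerset | Y.Nonempty ∧ motive Y} card
    ⟨{a}, by simp [singleton a ha, show a ∈ T from ha]⟩
  simp only [mem_filter, mem_powerset] at hY hmax
  obtain ⟨hYT, hYne, hmotive⟩ := hY
  obtain rfl | hssub := hYT.eq_or_ssubset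
  · exact hmotive
  obtain ⟨u, hu, v, hv, hvY, huv⟩ := exists_adj_of_ssubset_of_connected hT hYne hssub
  have hle := hmax (Insert.insert v Y) ⟨insert_subset hv hYT, insert_nonempty v Y,
    insert Y hYT u hu v hv hvY huv hmotive⟩
  rw [card_insert_of_notMem hvY] at hle
  omega

variable [DecidableEq V]

theorem IsDivision.card_touching_add_card_le {U T : Finset V} {𝒟 : Finset (Finset V)}
    (h𝒟 : IsDivision G U 𝒟) (hTU : T ⊆ U) (hT : (G.induce (T : Set V)).Connected) :
    #{P ∈ 𝒟 | ¬ Disjoint T P} + #T ≤ 1 + ∑ v ∈ T, #{P ∈ 𝒟 | v ∈ P} := by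
  refine connected_finset_induction hT (fun v _ => ?_) (fun Y hYT u hu v hv hvY huv ih => ?_)
  · simp [add_comm]
  obtain ⟨Q, hQ, huQ, hvQ⟩ := h𝒟.exists_mem_of_adj u (hTU (hYT hu)) v (hTU hv) huv
  have htouch : {P ∈ 𝒟 | ¬ Disjoint (insert v Y) P} =
      {P ∈ 𝒟 | ¬ Disjoint Y P} ∪ {P ∈ 𝒟 | v ∈ P} := by
    rw [← filter_or]
    simp only [disjoint_insert_left, not_and_or, not_not, or_comm]
  have hoverlap : 0 < #({P ∈ 𝒟 | ¬ Disjoint Y P} ∩ {P ∈ 𝒟 | v ∈ P}) :=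
    card_pos.2 ⟨Q, mem_inter.2 ⟨mem_filter.2 ⟨hQ, not_disjoint_iff.2 ⟨u, hu, huQ⟩⟩,
      mem_filter.2 ⟨hQ, hvQ⟩⟩⟩
  have hadd := card_union_add_card_inter {P ∈ 𝒟 | ¬ Disjoint Y P} {P ∈ 𝒟 | v ∈ P}
  rw [htouch, card_insert_of_notMem hvY, sum_insert hvY]
  omega

/-- The branch sets, among those indexed by `X`, that meet `P`. -/
def branchTrace (T : W → Finset V) (X : Finset W) (P : Finset V) : Finset W :=
  {w ∈ X | ¬ Disjoint (T w) P}

theorem card_branchTrace_le {T : W → Finset V} {X : Finset W}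
    (hT : (X : Set W).PairwiseDisjoint T) (P : Finset V) : #(branchTrace T X P) ≤ #P := by
  have hdisj : (branchTrace T X P : Set W).PairwiseDisjoint (fun w => T w ∩ P) :=
    (hT.subset (coe_subset.2 (filter_subset _ _))).mono fun _ => inter_subset_left
  exact (card_le_card_biUnion hdisj fun w hw =>
    not_disjoint_iff_nonempty_inter.1 (mem_filter.1 hw).2).trans
    (card_le_card (biUnion_subset.2 fun _ _ => inter_subset_right))

theorem IsDivision.sum_card_branchTrace_add_le {T : W → Finset V} {X : Finset W}
    {𝒟 : Finset (Finset V)} (h𝒟 : IsDivision G (X.biUnion T) 𝒟)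
    (hT : ∀ w ∈ X, (G.induce (T w : Set V)).Connected) (hdisj : (X : Set W).PairwiseDisjoint T) :
    ∑ P ∈ 𝒟, #(branchTrace T X P) + #(X.biUnion T) ≤ #X + ∑ P ∈ 𝒟, #P := by
  calc ∑ P ∈ 𝒟, #(branchTrace T X P) + #(X.biUnion T)
      = ∑ w ∈ X, (#{P ∈ 𝒟 | ¬ Disjoint (T w) P} + #(T w)) := by
        rw [sum_add_distrib, ← card_biUnion hdisj]
        exact congrArg (· + _) (sum_card_bipartiteAbove_eq_sum_card_bipartiteBelow
          fun P w => ¬ Disjoint (T w) P)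
    _ ≤ ∑ w ∈ X, (1 + ∑ v ∈ T w, #{P ∈ 𝒟 | v ∈ P}) :=
        sum_le_sum fun w hw => h𝒟.card_touching_add_card_le (subset_biUnion_of_mem T hw) (hT w hw)
    _ = #X + ∑ v ∈ X.biUnion T, #{P ∈ 𝒟 | v ∈ P} := by
        rw [sum_add_distrib, sum_biUnion hdisj, sum_const, smul_eq_mul, mul_one]
    _ = #X + ∑ P ∈ 𝒟, #{v ∈ X.biUnion T | v ∈ P} :=
        congrArg (#X + ·) (sum_card_bipartiteAbove_eq_sum_card_bipartiteBelow fun v P => v ∈ P)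
    _ ≤ #X + ∑ P ∈ 𝒟, #P := by
        gcongr with P
        exact fun v hv => (mem_filter.1 hv).2

theorem IsDivision.exists_mem_branchTrace {T : W → Finset V} {X : Finset W}
    {𝒟 : Finset (Finset V)} (h𝒟 : IsDivision G (X.biUnion T) 𝒟) {w w' : W} (hw : w ∈ X)
    (hw' : w' ∈ X) (h : ∃ a ∈ T w, ∃ b ∈ T w', G.Adj a b) :
    ∃ P ∈ 𝒟, w ∈ branchTrace T X P ∧ w' ∈ branchTrace T X P := by
  obtain ⟨a, ha, b, hb, hab⟩ := h
  obtain ⟨P, hP, haP, hbP⟩ := h𝒟.exists_mem_of_adj a (mem_biUnion.2 ⟨w, hw, ha⟩) b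
    (mem_biUnion.2 ⟨w', hw', hb⟩) hab
  exact ⟨P, hP, mem_filter.2 ⟨hw, not_disjoint_iff.2 ⟨a, ha, haP⟩⟩,
    mem_filter.2 ⟨hw', not_disjoint_iff.2 ⟨b, hb, hbP⟩⟩⟩

end BranchTrace

namespace DepthMinorRealization

variable {V W : Type*} {r : ℕ} {G : SimpleGraph V} {H : SimpleGraph W}

theorem exists_connected_superset (D : DepthMinorRealization r G H) (w : W) (A : Finset V)
    (hA : (A : Set V) ⊆ D.S w) :
    ∃ T : Finset V, (T : Set V) ⊆ D.S w ∧ D.center w ∈ T ∧ A ⊆ T ∧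
      (G.induce (T : Set V)).Connected ∧ #T ≤ 1 + r * #A := by
  classical
  induction A using Finset.induction with
  | empty =>
    refine ⟨{D.center w}, by simpa using D.center_mem w, mem_singleton_self _, empty_subset _, ?_,
      by simp⟩
    rw [coe_singleton]
    exact ⟨.of_subsingleton⟩
  | insert v A hv ih =>
    rw [coe_insert, Set.insert_subset_iff] at hA
    obtain ⟨T, hTS, hcT, hAT, hT, hcard⟩ := ih hA.2
    obtain ⟨p, hp, hpS⟩ := D.radius w v hA.1
    have hcp : D.center w ∈ p.support.toFinset := List.mem_toFinset.2 p.start_mem_support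
    have hsupp : #p.support.toFinset ≤ r + 1 :=
      (List.toFinset_card_le _).trans (by rw [p.length_support]; omega)
    refine ⟨T ∪ p.support.toFinset, ?_, mem_union_left _ hcT, ?_, ?_, ?_⟩
    · rw [coe_union, List.coe_toFinset]
      exact Set.union_subset hTS hpS
    · exact insert_subset (mem_union_right _ (List.mem_toFinset.2 p.end_mem_support))
        (hAT.trans subset_union_left)
    · rw [coe_union, List.coe_toFinset]
      exact SimpleGraph.induce_union_connected hT.preconnected
        p.connected_induce_support.preconnected ⟨_, hcT, p.start_mem_support⟩
    · have hinter : 0 < #(T ∩ p.support.toFinset) := card_pos.2 ⟨_, mem_inter.2 ⟨hcT, hcp⟩⟩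
      have := card_union_add_card_inter T p.support.toFinset
      rw [card_insert_of_notMem hv, mul_add_one]
      omega

theorem exists_connected_model [DecidableEq V] (D : DepthMinorRealization r G H)
    (F : Finset (W × W)) (hF : ∀ p ∈ F, H.Adj p.1 p.2) :
    ∃ T : W → Finset V, (∀ w, (G.induce (T w : Set V)).Connected) ∧
      Pairwise (Function.onFun Disjoint T) ∧
      (∀ p ∈ F, ∃ a ∈ T p.1, ∃ b ∈ T p.2, G.Adj a b) ∧
      ∀ X : Finset W, #(X.biUnion T) ≤ #X + 2 * r * #F := by
  have := Classical.decEq W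
  choose a ha b hb hab using fun p : F => D.adj _ _ (hF p.1 p.2)
  let A (w : W) : Finset V :=
    ({p | p.1.1 = w} : Finset F).image a ∪ ({p | p.1.2 = w} : Finset F).image b
  have hA (w : W) : (A w : Set V) ⊆ D.S w := by
    rw [coe_union, Set.union_subset_iff, coe_image, coe_image, Set.image_subset_iff,
      Set.image_subset_iff]
    constructor
    · rintro p hp
      exact (mem_filter.1 hp).2 ▸ ha p
    · rintro p hp
      exact (mem_filter.1 hp).2 ▸ hb p
  choose T hTS _ hAT hT hcard using fun w => D.exists_connected_superset w (A w) (hA w)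
  refine ⟨T, hT, fun w w' hww' => disjoint_coe.1 ((D.disj w w' hww').mono (hTS w) (hTS w')),
    fun p hp => ?_, fun X => ?_⟩
  · exact ⟨a ⟨p, hp⟩, hAT _ (mem_union_left _ (mem_image_of_mem a (by simp))),
      b ⟨p, hp⟩, hAT _ (mem_union_right _ (mem_image_of_mem b (by simp))), hab ⟨p, hp⟩⟩
  · have hfiber (e : F → W) : ∑ w ∈ X, #{p | e p = w} ≤ #F := by
      rw [sum_card_fiberwise_eq_card_filter, ← Fintype.card_coe F]
      exact card_le_univ _
    calc #(X.biUnion T) ≤ ∑ w ∈ X, #(T w) := card_biUnion_le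
      _ ≤ ∑ w ∈ X, (1 + r * (#{p : F | p.1.1 = w} + #{p : F | p.1.2 = w})) := by
          gcongr with w
          exact (hcard w).trans (by
            gcongr
            exact (card_union_le _ _).trans (add_le_add card_image_le card_image_le))
      _ = #X + r * (∑ w ∈ X, #{p : F | p.1.1 = w} + ∑ w ∈ X, #{p : F | p.1.2 = w}) := by
          rw [sum_add_distrib, ← mul_sum, sum_add_distrib, sum_const, smul_eq_mul, mul_one]
      _ ≤ #X + r * (#F + #F) := by
          gcongr
          · exact hfiber fun p => p.1.1
          · exact hfiber fun p => p.1.2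
      _ = #X + 2 * r * #F := by ring

end DepthMinorRealization

section HittingSet

variable {α : Type*} {γ : ℝ} {E : Finset α} {R : Finset (Finset α)}

theorem exists_mem_card_notMem_le [DecidableEq α] (hE : E.Nonempty)
    (hR : ∀ t ∈ R, t ⊆ E ∧ γ * #E ≤ #t) : ∃ x ∈ E, (#{t ∈ R | x ∉ t} : ℝ) ≤ (1 - γ) * #R := by
  refine exists_le_of_sum_le hE ?_
  calc ∑ x ∈ E, (#{t ∈ R | x ∉ t} : ℝ)
      = ∑ t ∈ R, (#{x ∈ E | x ∉ t} : ℝ) := by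
        exact_mod_cast sum_card_bipartiteAbove_eq_sum_card_bipartiteBelow fun x t => x ∉ t
    _ ≤ ∑ t ∈ R, (1 - γ) * #E := by
        gcongr with t ht
        have := card_sdiff_add_card_eq_card (hR t ht).1
        rw [filter_notMem_eq_sdiff]
        rify at this
        linarith [(hR t ht).2]
    _ = ∑ x ∈ E, (1 - γ) * #R := by
        simp only [sum_const, nsmul_eq_mul]
        ring

theorem exists_card_disjoint_le_pow [DecidableEq α] (hE : E.Nonempty) (hγ : γ ≤ 1)
    (hR : ∀ t ∈ R, t ⊆ E ∧ γ * #E ≤ #t) (m : ℕ) :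
    ∃ F ⊆ E, #F ≤ m ∧ (#{t ∈ R | Disjoint F t} : ℝ) ≤ (1 - γ) ^ m * #R := by
  induction m with
  | zero => exact ⟨∅, empty_subset E, le_rfl, by simp⟩
  | succ m ih =>
    obtain ⟨F, hFE, hFm, hF⟩ := ih
    obtain ⟨x, hx, hle⟩ := exists_mem_card_notMem_le hE
      fun t (ht : t ∈ {t ∈ R | Disjoint F t}) => hR t (mem_filter.1 ht).1
    refine ⟨insert x F, insert_subset hx hFE, (card_insert_le x F).trans (by omega), ?_⟩
    calc (#{t ∈ R | Disjoint (insert x F) t} : ℝ)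
        = #{t ∈ {t ∈ R | Disjoint F t} | x ∉ t} := by
          rw [filter_filter]
          simp only [disjoint_insert_left, and_comm]
      _ ≤ (1 - γ) * ((1 - γ) ^ m * #R) :=
          hle.trans (mul_le_mul_of_nonneg_left hF (sub_nonneg.2 hγ))
      _ = (1 - γ) ^ (m + 1) * #R := by ring

theorem exists_hittingSet_of_card_lt_exp (hE : E.Nonempty) (hγ : γ ≤ 1)
    (hR : ∀ t ∈ R, t ⊆ E ∧ γ * #E ≤ #t) {m : ℕ} (hm : (#R : ℝ) < Real.exp (γ * m)) :
    ∃ F ⊆ E, #F ≤ m ∧ ∀ t ∈ R, ¬ Disjoint F t := by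
  classical
  obtain ⟨F, hFE, hFm, hF⟩ := exists_card_disjoint_le_pow hE hγ hR m
  have hlt : (#{t ∈ R | Disjoint F t} : ℝ) < 1 := by
    calc (#{t ∈ R | Disjoint F t} : ℝ) ≤ (1 - γ) ^ m * #R := hF
      _ ≤ Real.exp (-γ) ^ m * #R := by
          gcongr
          exact Real.one_sub_le_exp_neg γ
      _ < Real.exp (-γ) ^ m * Real.exp (γ * m) := by gcongr
      _ = 1 := by
          rw [← Real.exp_nat_mul, ← Real.exp_add]
          ring_nf
          exact Real.exp_zero
  have hempty : {t ∈ R | Disjoint F t} = ∅ :=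
    card_eq_zero.1 (Nat.lt_one_iff.1 (by exact_mod_cast hlt))
  exact ⟨F, hFE, hFm, fun t ht => filter_eq_empty_iff.1 hempty ht⟩

end HittingSet

section FamilyCount

variable {α : Type*}

theorem card_powerset_filter_card_le (A : Finset α) (M : ℕ) :
    #{S ∈ A.powerset | #S ≤ M} ≤ (#A + 1) ^ M := by
  classical
  have hcover : {S ∈ A.powerset | #S ≤ M} ⊆
      (Fintype.piFinset fun _ : Fin M => insertNone A).image fun f => eraseNone (univ.image f) := by
    intro S hS
    obtain ⟨hSA, hSM⟩ := mem_filter.1 hS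
    rw [mem_powerset] at hSA
    refine mem_image.2 ⟨fun i => S.toList[i]?, ?_, ?_⟩
    · refine Fintype.mem_piFinset.2 fun i => mem_insertNone.2 fun a ha => hSA ?_
      exact mem_toList.1 (List.mem_of_getElem? ha)
    · ext a
      rw [mem_eraseNone, mem_image, ← mem_toList, List.mem_iff_getElem?]
      constructor
      · rintro ⟨i, -, hi⟩
        exact ⟨i, hi⟩
      · rintro ⟨i, hi⟩
        have : i < #S := by simpa using (List.getElem?_eq_some_iff.1 hi).1
        exact ⟨⟨i, by omega⟩, mem_univ _, hi⟩
  calc #{S ∈ A.powerset | #S ≤ M}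
      ≤ #(Fintype.piFinset fun _ : Fin M => insertNone A) :=
        (card_le_card hcover).trans card_image_le
    _ = (#A + 1) ^ M := by simp

variable [DecidableEq α]

/-- The nonempty slices `{x ∈ X | (x, i) ∈ S}`, `i < M`, of an incidence set `S`. Every small family
of nonempty subsets of `X` is of this form, which is how such families are counted. -/
def slices (X : Finset α) (M : ℕ) (S : Finset (α × ℕ)) : Finset (Finset α) :=
  ((range M).image fun i => {x ∈ X | (x, i) ∈ S}).erase ∅

theorem slices_biUnion {X : Finset α} {M : ℕ} {𝒬 : Finset (Finset α)} {index : Finset α → ℕ}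
    (h𝒬 : 𝒬 ⊆ X.powerset) (hempty : ∅ ∉ 𝒬) (hindex : ∀ Q ∈ 𝒬, index Q < M)
    (hinj : Set.InjOn index 𝒬) : slices X M (𝒬.biUnion fun Q => Q ×ˢ {index Q}) = 𝒬 := by
  have hslice {Q} (hQ : Q ∈ 𝒬) :
      {x ∈ X | (x, index Q) ∈ 𝒬.biUnion fun Q => Q ×ˢ {index Q}} = Q := by
    ext x
    simp only [mem_filter, mem_biUnion, mem_product, mem_singleton]
    constructor
    · rintro ⟨-, Q', hQ', hx, h⟩
      rwa [hinj hQ hQ' h]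
    · exact fun hx => ⟨mem_powerset.1 (h𝒬 hQ) hx, Q, hQ, hx, rfl⟩
  ext Q
  rw [slices, mem_erase, mem_image]
  constructor
  · rintro ⟨hne, i, -, rfl⟩
    obtain ⟨x, hx⟩ := nonempty_iff_ne_empty.2 hne
    obtain ⟨Q, hQ, h⟩ := mem_biUnion.1 (mem_filter.1 hx).2
    obtain rfl : i = index Q := mem_singleton.1 (mem_product.1 h).2
    rwa [hslice hQ]
  · exact fun hQ => ⟨ne_of_mem_of_not_mem hQ hempty, index Q, mem_range.2 (hindex Q hQ), hslice hQ⟩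

theorem card_families_sum_card_le (X : Finset α) (M : ℕ) :
    #{𝒬 ∈ X.powerset.powerset | ∅ ∉ 𝒬 ∧ ∑ Q ∈ 𝒬, #Q ≤ M} ≤ (#X * M + 1) ^ M := by
  have hcover : {𝒬 ∈ X.powerset.powerset | ∅ ∉ 𝒬 ∧ ∑ Q ∈ 𝒬, #Q ≤ M} ⊆
      {S ∈ (X ×ˢ range M).powerset | #S ≤ M}.image (slices X M) := by
    intro 𝒬 h
    simp only [mem_filter, mem_powerset] at h
    obtain ⟨h𝒬, hempty, hsum⟩ := h
    have hcard : #𝒬 ≤ M := calc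
      #𝒬 = ∑ Q ∈ 𝒬, 1 := card_eq_sum_ones 𝒬
      _ ≤ ∑ Q ∈ 𝒬, #Q := sum_le_sum fun Q hQ =>
          card_pos.2 (nonempty_iff_ne_empty.2 (ne_of_mem_of_not_mem hQ hempty))
      _ ≤ M := hsum
    have hindex (Q) (hQ : Q ∈ 𝒬) : 𝒬.toList.idxOf Q < M :=
      (List.idxOf_lt_length_of_mem (mem_toList.2 hQ)).trans_le (by rwa [length_toList])
    have hinj : Set.InjOn (𝒬.toList.idxOf ·) 𝒬 :=
      fun Q hQ _ _ h => (List.idxOf_inj (mem_toList.2 hQ)).1 h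
    refine mem_image.2 ⟨_, mem_filter.2 ⟨mem_powerset.2 ?_, ?_⟩,
      slices_biUnion h𝒬 hempty hindex hinj⟩
    · exact biUnion_subset.2 fun Q hQ => product_subset_product (mem_powerset.1 (h𝒬 hQ))
        (singleton_subset_iff.2 (mem_range.2 (hindex Q hQ)))
    · exact card_biUnion_le.trans (by simpa using hsum)
  calc #{𝒬 ∈ X.powerset.powerset | ∅ ∉ 𝒬 ∧ ∑ Q ∈ 𝒬, #Q ≤ M}
      ≤ #{S ∈ (X ×ˢ range M).powerset | #S ≤ M} := (card_le_card hcover).trans card_image_le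
    _ ≤ (#(X ×ˢ range M) + 1) ^ M := card_powerset_filter_card_le _ M
    _ = (#X * M + 1) ^ M := by rw [card_product, card_range]

end FamilyCount

section Potential

/-- The slowly increasing weight `1 ≤ potential n < 2` of an `n`-element set. Weighting the density
with it makes densest sets expand: halving the set loses a factor `1 - Ω(1 / (log n) ^ 2)`. -/
noncomputable def potential (n : ℕ) : ℝ := 2 - 1 / (Nat.log 2 n + 1)

/-- A quarter of the amount by which `potential` drops when an `n`-element set is halved. Families
of sets of size at most `n / 2` and total size at most `(1 + slack n) * n` fail to cover a fraction
`slack n` of the edges of a densest set of size `n`. -/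
noncomputable def slack (n : ℕ) : ℝ := 1 / (4 * ((Nat.log 2 n : ℝ) + 1) ^ 2)

theorem one_le_potential (n : ℕ) : 1 ≤ potential n := by
  have : 1 / ((Nat.log 2 n : ℝ) + 1) ≤ 1 := div_le_one_of_le₀ (by simp) (by positivity)
  unfold potential
  linarith

theorem potential_nonneg (n : ℕ) : 0 ≤ potential n :=
  zero_le_one.trans (one_le_potential n)

theorem potential_le_two (n : ℕ) : potential n ≤ 2 :=
  sub_le_self 2 (by positivity)

theorem slack_pos (n : ℕ) : 0 < slack n := by
  unfold slack
  positivity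

theorem four_mul_slack (n : ℕ) : 4 * slack n = 1 / ((Nat.log 2 n : ℝ) + 1) ^ 2 := by
  unfold slack
  field_simp

theorem four_mul_slack_le_one (n : ℕ) : 4 * slack n ≤ 1 := by
  rw [four_mul_slack]
  exact div_le_one_of_le₀ (one_le_pow₀ (by simp)) (by positivity)

theorem potential_le_sub_slack {q k : ℕ} (hk : 2 ≤ k) (hqk : 2 * q ≤ k) :
    potential q ≤ potential k - 4 * slack k := by
  have hlog : Nat.log 2 q + 1 ≤ Nat.log 2 k := by
    rcases q.eq_zero_or_pos with rfl | hq
    · rw [Nat.log_zero_right]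
      exact Nat.log_pos one_lt_two hk
    · rw [← Nat.log_mul_base one_lt_two hq.ne', mul_comm]
      exact Nat.log_mono_right hqk
  rify at hlog
  have hpos : (0 : ℝ) < Nat.log 2 k := by linarith [(Nat.cast_nonneg (Nat.log 2 q) : (0 : ℝ) ≤ _)]
  have hgap : 1 / ((Nat.log 2 k : ℝ) + 1) + 1 / ((Nat.log 2 k : ℝ) + 1) ^ 2 ≤
      1 / ((Nat.log 2 q : ℝ) + 1) := calc
    _ = (Nat.log 2 k + 2) / ((Nat.log 2 k : ℝ) + 1) ^ 2 := by field_simp; ring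
    _ ≤ 1 / (Nat.log 2 k : ℝ) := by
        rw [div_le_div_iff₀ (by positivity) hpos]
        nlinarith
    _ ≤ 1 / ((Nat.log 2 q : ℝ) + 1) := by gcongr
  rw [four_mul_slack, potential, potential]
  linarith

end Potential

section Densest

variable {W : Type*} (H : SimpleGraph W) [DecidableRel H.Adj]

/-- The number of ordered edges inside `Y` per vertex of `Y`, discounted by `potential`. -/
noncomputable def density (Y : Finset W) : ℝ := #(H.interedges Y Y) / (#Y * potential #Y)

theorem card_interedges_eq_density_mul (Y : Finset W) :
    (#(H.interedges Y Y) : ℝ) = density H Y * (#Y * potential #Y) := by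
  rcases Y.eq_empty_or_nonempty with rfl | hY
  · simp
  · have := one_le_potential #Y
    have := hY.card_pos
    rw [density, div_mul_cancel₀]
    positivity

theorem density_nonneg (Y : Finset W) : 0 ≤ density H Y :=
  div_nonneg (by positivity) (mul_nonneg (by positivity) (potential_nonneg _))

theorem density_le_card (Y : Finset W) : density H Y ≤ #Y := by
  refine div_le_of_le_mul₀ (mul_nonneg (by positivity) (potential_nonneg _))
    (by positivity) ?_
  calc (#(H.interedges Y Y) : ℝ) ≤ #Y * #Y := by exact_mod_cast H.card_interedges_le_mul Y Y
    _ ≤ #Y * (#Y * potential #Y) := by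
        gcongr
        exact le_mul_of_one_le_right (by positivity) (one_le_potential _)

theorem interedges_nonempty_of_density_pos {Y : Finset W} (hY : 0 < density H Y) :
    (H.interedges Y Y).Nonempty := by
  rw [nonempty_iff_ne_empty]
  rintro h
  simp [density, h] at hY

theorem two_le_card_of_density_pos {Y : Finset W} (hY : 0 < density H Y) : 2 ≤ #Y := by
  obtain ⟨p, hp⟩ := interedges_nonempty_of_density_pos H hY
  rw [SimpleGraph.mem_interedges_iff] at hp
  exact one_lt_card.2 ⟨p.1, hp.1, p.2, hp.2.1, hp.2.2.ne⟩

theorem avgDeg_le_two_mul_density_univ [Fintype W] : avgDeg H ≤ 2 * density H univ := by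
  have hsum : ∑ w, {w' | H.Adj w w'}.ncard = #(H.interedges univ univ) := by
    simp_rw [SimpleGraph.interedges, Rel.interedges, card_filter, univ_product_univ,
      Fintype.sum_prod_type, ← card_filter, Set.ncard_eq_toFinset_card', Set.toFinset_ofPred]
  calc avgDeg H = #(H.interedges univ univ) / Fintype.card W := by
        rw [avgDeg, ← hsum, Nat.cast_sum]
    _ = density H univ * (Fintype.card W / Fintype.card W) * potential (Fintype.card W) := by
        rw [card_interedges_eq_density_mul, card_univ]
        ring
    _ ≤ density H univ * 1 * 2 := by
        gcongr
        · exact potential_nonneg _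
        · exact mul_nonneg (density_nonneg H _) zero_le_one
        · exact density_nonneg H _
        · exact div_self_le_one _
        · exact potential_le_two _
    _ = _ := by ring

/-- `X` has maximum density among all vertex sets. -/
structure IsDensest (X : Finset W) : Prop where
  nonempty : X.Nonempty
  density_le : ∀ Y, density H Y ≤ density H X

theorem exists_isDensest [Finite W] [Nonempty W] : ∃ X, IsDensest H X := by
  classical
  have := Fintype.ofFinite W
  obtain ⟨X, hX, hmax⟩ := exists_max_image ({Y | Y.Nonempty} : Finset (Finset W)) (density H)
    ⟨univ, by simp⟩
  refine ⟨X, (mem_filter.1 hX).2, fun Y => ?_⟩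
  rcases Y.eq_empty_or_nonempty with rfl | hY
  · exact (show density H ∅ = 0 by simp [density]).trans_le (density_nonneg H X)
  · exact hmax Y (by simpa using hY)

variable {H} in
theorem IsDensest.card_interedges_le {X Q : Finset W} (hX : IsDensest H X) (hk : 2 ≤ #X)
    (hQ : 2 * #Q ≤ #X) :
    (#(H.interedges Q Q) : ℝ) ≤ density H X * (potential #X - 4 * slack #X) * #Q := by
  rw [card_interedges_eq_density_mul, mul_assoc, mul_comm (#Q : ℝ)]
  gcongr
  · exact mul_nonneg (potential_nonneg _) (by positivity)
  · exact density_nonneg H X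
  · exact hX.density_le Q
  · exact potential_le_sub_slack hk hQ

variable [DecidableEq W]

/-- The ordered edges inside `X` that lie inside no member of `𝒬`. -/
def uncoveredEdges (X : Finset W) (𝒬 : Finset (Finset W)) : Finset (W × W) :=
  {p ∈ H.interedges X X | ∀ Q ∈ 𝒬, ¬ (p.1 ∈ Q ∧ p.2 ∈ Q)}

theorem card_interedges_le_add_sum (X : Finset W) (𝒬 : Finset (Finset W)) :
    #(H.interedges X X) ≤ #(uncoveredEdges H X 𝒬) + ∑ Q ∈ 𝒬, #(H.interedges Q Q) := by
  have hcover : H.interedges X X ⊆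
      uncoveredEdges H X 𝒬 ∪ 𝒬.biUnion fun Q => H.interedges Q Q := by
    intro p hp
    by_cases hp' : p ∈ uncoveredEdges H X 𝒬
    · exact mem_union_left _ hp'
    · obtain ⟨Q, hQ, h₁, h₂⟩ : ∃ Q ∈ 𝒬, p.1 ∈ Q ∧ p.2 ∈ Q := by
        simpa [uncoveredEdges, hp] using hp'
      exact mem_union_right _ (mem_biUnion.2 ⟨Q, hQ, H.mem_interedges_iff.2
        ⟨h₁, h₂, (H.mem_interedges_iff.1 hp).2.2⟩⟩)
  calc #(H.interedges X X) ≤ _ := card_le_card hcover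
    _ ≤ _ := card_union_le _ _
    _ ≤ _ := Nat.add_le_add_left card_biUnion_le _

variable {H}

theorem IsDensest.slack_mul_le_card_uncoveredEdges {X : Finset W} (hX : IsDensest H X)
    (hk : 2 ≤ #X) {𝒬 : Finset (Finset W)} (h𝒬 : ∀ Q ∈ 𝒬, 2 * #Q ≤ #X)
    (hsum : ((∑ Q ∈ 𝒬, #Q : ℕ) : ℝ) ≤ #X * (1 + slack #X)) :
    slack #X * #(H.interedges X X) ≤ #(uncoveredEdges H X 𝒬) := by
  set k := #X
  set d := density H X
  set ε := slack k
  have hd : 0 ≤ d := density_nonneg H X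
  have hε : 0 < ε := slack_pos k
  have hε₁ : 4 * ε ≤ 1 := four_mul_slack_le_one k
  have hcovered : (∑ Q ∈ 𝒬, #(H.interedges Q Q) : ℝ) ≤
      d * (potential k - 4 * ε) * (k * (1 + ε)) := by
    refine (sum_le_sum fun Q hQ => hX.card_interedges_le hk (h𝒬 Q hQ)).trans ?_
    rw [← mul_sum, ← Nat.cast_sum]
    exact mul_le_mul_of_nonneg_left hsum (mul_nonneg hd (by linarith [one_le_potential k]))
  have hE := card_interedges_eq_density_mul H X
  have hcount := card_interedges_le_add_sum H X 𝒬
  rify at hcount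
  have hgain : ε * potential k ≤ potential k - (potential k - 4 * ε) * (1 + ε) := by
    nlinarith [potential_le_two k, sq_nonneg ε]
  calc ε * #(H.interedges X X) = d * k * (ε * potential k) := by rw [hE]; ring
    _ ≤ d * k * (potential k - (potential k - 4 * ε) * (1 + ε)) := by gcongr
    _ ≤ #(uncoveredEdges H X 𝒬) := by linarith

theorem uncoveredEdges_erase_empty (X : Finset W) (𝒬 : Finset (Finset W)) :
    uncoveredEdges H X (𝒬.erase ∅) = uncoveredEdges H X 𝒬 := by
  refine filter_congr fun p _ => ⟨fun h Q hQ => ?_, fun h Q hQ => h Q (mem_of_mem_erase hQ)⟩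
  rcases eq_or_ne Q ∅ with rfl | hne
  · simp
  · exact h Q (mem_erase.2 ⟨hne, hQ⟩)

theorem card_families_lt_exp {k : ℕ} (hk : k ≠ 0) :
    (((k * (2 * k) + 1) ^ (2 * k) : ℕ) : ℝ) <
      Real.exp (slack k * (24 * (Nat.log 2 k + 1) ^ 3 * k : ℕ)) := by
  set L := Nat.log 2 k + 1
  have hkL : k < 2 ^ L := Nat.lt_pow_succ_log_self one_lt_two k
  have hbase : k * (2 * k) + 1 ≤ 2 ^ (3 * L) := calc
    k * (2 * k) + 1 ≤ 2 ^ L * 2 ^ L * 2 := by nlinarith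
    _ = 2 ^ (2 * L + 1) := by ring
    _ ≤ 2 ^ (3 * L) := Nat.pow_le_pow_right two_pos (by omega)
  have hexponent : slack k * (24 * L ^ 3 * k : ℕ) = (3 * L * (2 * k) : ℕ) := by
    have hL : (L : ℝ) = Nat.log 2 k + 1 := by simp [L]
    have : (L : ℝ) ≠ 0 := by positivity
    rw [slack, ← hL]
    push_cast
    field_simp
    ring
  calc (((k * (2 * k) + 1) ^ (2 * k) : ℕ) : ℝ)
      ≤ (2 ^ (3 * L * (2 * k)) : ℕ) := by
        rw [pow_mul 2 (3 * L)]
        gcongr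
    _ = 2 ^ (3 * L * (2 * k)) := by push_cast; rfl
    _ < Real.exp 1 ^ (3 * L * (2 * k)) :=
        pow_lt_pow_left₀ (lt_trans (by norm_num) Real.exp_one_gt_d9) zero_le_two (by positivity)
    _ = Real.exp (slack k * (24 * L ^ 3 * k : ℕ)) := by
        rw [hexponent, ← Real.exp_nat_mul, mul_one]

theorem IsDensest.exists_hitting_edges {X : Finset W} (hX : IsDensest H X)
    (hd : 0 < density H X) :
    ∃ F ⊆ H.interedges X X, #F ≤ 24 * (Nat.log 2 #X + 1) ^ 3 * #X ∧
      ∀ 𝒬 ⊆ X.powerset, (∀ Q ∈ 𝒬, 2 * #Q ≤ #X) →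
        ((∑ Q ∈ 𝒬, #Q : ℕ) : ℝ) ≤ #X * (1 + slack #X) → ¬ Disjoint F (uncoveredEdges H X 𝒬) := by
  classical
  let IsSmall (𝒬 : Finset (Finset W)) : Prop :=
    (∀ Q ∈ 𝒬, 2 * #Q ≤ #X) ∧ ((∑ Q ∈ 𝒬, #Q : ℕ) : ℝ) ≤ #X * (1 + slack #X)
  let R := {𝒬 ∈ {𝒬 ∈ X.powerset.powerset | ∅ ∉ 𝒬 ∧ ∑ Q ∈ 𝒬, #Q ≤ 2 * #X} | IsSmall 𝒬}.image
    (uncoveredEdges H X)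
  have hk := two_le_card_of_density_pos H hd
  have hslack : slack #X ≤ 1 := by linarith [four_mul_slack_le_one #X, slack_pos #X]
  have hcard : (#R : ℝ) < Real.exp (slack #X * (24 * (Nat.log 2 #X + 1) ^ 3 * #X : ℕ)) := by
    refine lt_of_le_of_lt ?_ (card_families_lt_exp (k := #X) (by omega))
    exact_mod_cast card_image_le.trans ((card_filter_le _ _).trans
      (card_families_sum_card_le X (2 * #X)))
  obtain ⟨F, hFE, hF, hhit⟩ := exists_hittingSet_of_card_lt_exp
    (interedges_nonempty_of_density_pos H hd) hslack (fun t ht => by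
      obtain ⟨𝒬, h𝒬, rfl⟩ := mem_image.1 ht
      obtain ⟨hsmall, hsum⟩ := (mem_filter.1 h𝒬).2
      exact ⟨filter_subset _ _, hX.slack_mul_le_card_uncoveredEdges hk hsmall hsum⟩) hcard
  refine ⟨F, hFE, hF, fun 𝒬 h𝒬X hsmall hsum => ?_⟩
  rw [← uncoveredEdges_erase_empty]
  have hsum_erase : ∑ Q ∈ 𝒬.erase ∅, #Q = ∑ Q ∈ 𝒬, #Q := sum_erase _ card_empty
  have hsum_le : ∑ Q ∈ 𝒬, #Q ≤ 2 * #X := by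
    rify
    push_cast at hsum
    nlinarith [(Nat.cast_nonneg #X : (0 : ℝ) ≤ _)]
  refine hhit _ (mem_image_of_mem _ (mem_filter.2 ⟨mem_filter.2 ⟨?_, ?_, ?_⟩, ?_, ?_⟩))
  · exact mem_powerset.2 ((erase_subset _ _).trans h𝒬X)
  · exact notMem_erase _ _
  · rwa [hsum_erase]
  · exact fun Q hQ => hsmall Q (mem_of_mem_erase hQ)
  · rwa [hsum_erase]

end Densest

section Combination

variable {V W : Type*} [DecidableEq V] {C₀ δ : ℝ} {r : ℕ} {G : SimpleGraph V}
  {H : SimpleGraph W} [DecidableRel H.Adj] {X : Finset W}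

theorem DepthMinorRealization.exists_cover [DecidableEq W] (D : DepthMinorRealization r G H)
    (h : HasSublinearSeparators G C₀ δ) (hC₀ : 0 < C₀) (hδ : 0 < δ) {F : Finset (W × W)}
    (hF : F ⊆ H.interedges X X) {t : ℝ} (ht : 0 < t) (htM : divisionConst C₀ δ ≤ t ^ δ)
    (htX : t ≤ #X) :
    ∃ 𝒬 ⊆ X.powerset, (∀ Q ∈ 𝒬, (#Q : ℝ) ≤ 3 * t) ∧
      ((∑ Q ∈ 𝒬, #Q : ℕ) : ℝ) ≤ #X + (#X + 2 * r * #F) * (divisionConst C₀ δ / t ^ δ) ∧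
      Disjoint F (uncoveredEdges H X 𝒬) := by
  obtain ⟨T, hT, hdisj, hFT, hcard⟩ :=
    D.exists_connected_model F fun p hp => (H.mem_interedges_iff.1 (hF hp)).2.2
  have hdisjX : (X : Set W).PairwiseDisjoint T := hdisj.set_pairwise _
  have hXT : #X ≤ #(X.biUnion T) :=
    card_le_card_biUnion hdisjX fun w _ => let ⟨v⟩ := (hT w).nonempty; ⟨v, v.2⟩
  obtain ⟨𝒟, h𝒟, hpiece, hsum⟩ :=
    h.exists_division hC₀ hδ ht htM (X.biUnion T) (htX.trans (by exact_mod_cast hXT))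
  refine ⟨𝒟.image (branchTrace T X), ?_, ?_, ?_, ?_⟩
  · exact image_subset_iff.2 fun P _ => mem_powerset.2 (filter_subset _ _)
  · refine forall_mem_image.2 fun P hP => le_trans ?_ (hpiece P hP)
    exact_mod_cast card_branchTrace_le hdisjX P
  · have himage : ∑ Q ∈ 𝒟.image (branchTrace T X), #Q ≤ ∑ P ∈ 𝒟, #(branchTrace T X P) :=
      sum_image_le_of_nonneg fun _ _ => Nat.zero_le _
    have htrace := h𝒟.sum_card_branchTrace_add_le (fun w _ => hT w) hdisjX
    have hcardX := hcard X
    have hbound := divisionBound_le (t := t) hC₀ hδ (Nat.cast_nonneg #(X.biUnion T))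
    have hmono : (#(X.biUnion T) : ℝ) * (divisionConst C₀ δ / t ^ δ) ≤
        (#X + 2 * r * #F) * (divisionConst C₀ δ / t ^ δ) := by
      have := divisionConst_pos hC₀ hδ
      gcongr
      exact_mod_cast hcardX
    rify at himage htrace hsum ⊢
    linarith
  · refine disjoint_left.2 fun p hp hunc => ?_
    obtain ⟨hpE, hunc⟩ := mem_filter.1 hunc
    rw [SimpleGraph.mem_interedges_iff] at hpE
    obtain ⟨P, hP, hmem⟩ := h𝒟.exists_mem_branchTrace hpE.1 hpE.2.1 (hFT p hp)
    exact hunc _ (mem_image_of_mem _ hP) hmem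

theorem IsDensest.rpow_card_le (hX : IsDensest H X) (hd : 0 < density H X)
    (D : DepthMinorRealization r G H) (h : HasSublinearSeparators G C₀ δ) (hC₀ : 0 < C₀)
    (hδ : 0 < δ) :
    (#X / 6 : ℝ) ^ δ ≤
      196 * divisionConst C₀ δ * ((Nat.log 2 #X : ℝ) + 1) ^ 5 * (r + 1) := by
  classical
  set k := #X
  set L : ℝ := Nat.log 2 k + 1
  set M := divisionConst C₀ δ
  by_contra! hlt
  have hM : 0 < M := divisionConst_pos hC₀ hδ
  have hL : 1 ≤ L := by simp [L]
  have hk : (0 : ℝ) < k := by exact_mod_cast hX.nonempty.card_pos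
  have hB : 1 ≤ 196 * L ^ 5 * (r + 1) := by
    have : 1 ≤ L ^ 5 * (r + 1) := one_le_mul_of_one_le_of_one_le (one_le_pow₀ hL) (by simp)
    linarith
  replace hlt : M * (196 * L ^ 5 * (r + 1)) < (k / 6 : ℝ) ^ δ := by linarith
  have htM : M ≤ (k / 6 : ℝ) ^ δ := (le_mul_of_one_le_right hM.le hB).trans hlt.le
  obtain ⟨F, hFX, hF, hhit⟩ := hX.exists_hitting_edges hd
  obtain ⟨𝒬, h𝒬X, hpiece, hsum, hdisj⟩ :=
    D.exists_cover h hC₀ hδ hFX (t := k / 6) (by positivity) htM (by linarith)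
  refine hhit 𝒬 h𝒬X (fun Q hQ => ?_) ?_ hdisj
  · have := hpiece Q hQ
    rify
    linarith
  · have hN : (k + 2 * r * #F : ℝ) ≤ 49 * L ^ 3 * (r + 1) * k := by
      have hF' : (#F : ℝ) ≤ 24 * L ^ 3 * k := by
        rify at hF
        exact hF
      have hL3 : (k : ℝ) ≤ L ^ 3 * k := le_mul_of_one_le_left hk.le (one_le_pow₀ hL)
      have hr : (0 : ℝ) ≤ r * (L ^ 3 * k) := by positivity
      nlinarith [mul_le_mul_of_nonneg_left hF' (Nat.cast_nonneg' r : (0 : ℝ) ≤ r)]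
    have hratio : M / (k / 6 : ℝ) ^ δ ≤ 1 / (196 * L ^ 5 * (r + 1)) := by
      rw [div_le_div_iff₀ (by positivity) (by positivity)]
      linarith
    calc ((∑ Q ∈ 𝒬, #Q : ℕ) : ℝ) ≤ k + (k + 2 * r * #F) * (M / (k / 6 : ℝ) ^ δ) := hsum
      _ ≤ k + 49 * L ^ 3 * (r + 1) * k * (1 / (196 * L ^ 5 * (r + 1))) := by gcongr
      _ = k * (1 + slack k) := by
          change _ = k * (1 + 1 / (4 * L ^ 2))
          field_simp
          ring

end Combination

section LogarithmicInequality

variable {δ B x R : ℝ} {m : ℕ}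

theorem logb_pow_le_mul_rpow (hδ : 0 < δ) (hm : m ≠ 0) (hx : 1 ≤ x) :
    Real.logb 2 x ^ m ≤ (m / (δ * Real.log 2)) ^ m * x ^ δ := by
  have hlog : Real.log x ≤ m / δ * x ^ (δ / m) := by
    have := Real.log_le_rpow_div (zero_le_one.trans hx) (ε := δ / m) (by positivity)
    rwa [div_div_eq_mul_div, mul_comm, mul_div_right_comm] at this
  have : 0 < Real.log 2 := Real.log_pos one_lt_two
  calc Real.logb 2 x ^ m ≤ (m / δ * x ^ (δ / m) / Real.log 2) ^ m := by
        have := Real.log_nonneg hx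
        rw [Real.logb]
        gcongr
    _ = (m / (δ * Real.log 2)) ^ m * (x ^ (δ / m)) ^ m := by
        rw [← mul_pow]
        ring
    _ = (m / (δ * Real.log 2)) ^ m * x ^ δ := by
        rw [← Real.rpow_mul_natCast (by positivity), div_mul_cancel₀ _ (by positivity)]

theorem exists_logb_le_of_rpow_le (hδ : 0 < δ) (hB : 0 < B) (hm : m ≠ 0) :
    ∃ A : ℝ, 0 < A ∧ ∀ x R : ℝ, 1 ≤ x → 1 ≤ R → x ^ δ ≤ B * Real.logb 2 x ^ m * R →
      Real.logb 2 x ≤ A * Real.logb 2 (R + 2) := by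
  have : 0 < Real.log 2 := Real.log_pos one_lt_two
  set K : ℝ := B * (m / (δ / 2 * Real.log 2)) ^ m
  have hK : 0 < K := by positivity
  refine ⟨2 / δ * (|Real.logb 2 K| + 1), by positivity, fun x R hx hR h => ?_⟩
  have hxpos : 0 < x := by linarith
  have hhalf : x ^ (δ / 2) ≤ K * R := by
    refine le_of_mul_le_mul_right ?_ (show 0 < x ^ (δ / 2) by positivity)
    calc x ^ (δ / 2) * x ^ (δ / 2) = x ^ δ := by rw [← Real.rpow_add hxpos, add_halves]
      _ ≤ B * ((m / (δ / 2 * Real.log 2)) ^ m * x ^ (δ / 2)) * R := by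
          refine h.trans ?_
          gcongr
          exact logb_pow_le_mul_rpow (half_pos hδ) hm hx
      _ = K * R * x ^ (δ / 2) := by ring
  have hℓ : 1 ≤ Real.logb 2 (R + 2) := by
    rw [Real.le_logb_iff_rpow_le one_lt_two (by linarith), Real.rpow_one]
    linarith
  have hlogs : δ / 2 * Real.logb 2 x ≤ (|Real.logb 2 K| + 1) * Real.logb 2 (R + 2) := calc
    δ / 2 * Real.logb 2 x = Real.logb 2 (x ^ (δ / 2)) :=
        (Real.logb_rpow_eq_mul_logb_of_pos hxpos).symm
    _ ≤ Real.logb 2 (K * R) := Real.logb_le_logb_of_le one_lt_two (by positivity) hhalf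
    _ = Real.logb 2 K + Real.logb 2 R := Real.logb_mul hK.ne' (by positivity)
    _ ≤ |Real.logb 2 K| * Real.logb 2 (R + 2) + Real.logb 2 (R + 2) :=
        add_le_add ((le_abs_self _).trans (le_mul_of_one_le_right (abs_nonneg _) hℓ))
          (Real.logb_le_logb_of_le one_lt_two (by positivity) (by linarith))
    _ = (|Real.logb 2 K| + 1) * Real.logb 2 (R + 2) := by ring
  calc Real.logb 2 x = 2 / δ * (δ / 2 * Real.logb 2 x) := by field_simp
    _ ≤ 2 / δ * ((|Real.logb 2 K| + 1) * Real.logb 2 (R + 2)) := by gcongr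
    _ = _ := by ring

theorem exists_le_of_rpow_le_logb (hδ : 0 < δ) (hB : 0 < B) (hm : m ≠ 0) :
    ∃ c : ℝ, 0 < c ∧ ∀ x R : ℝ, 1 ≤ x → 1 ≤ R → x ^ δ ≤ B * Real.logb 2 x ^ m * R →
      x ≤ c * R ^ (1 / δ) * Real.logb 2 (R + 2) ^ (m / δ) := by
  obtain ⟨A, hA, hlog⟩ := exists_logb_le_of_rpow_le hδ hB hm
  refine ⟨(B * A ^ m) ^ (1 / δ), by positivity, fun x R hx hR h => ?_⟩
  have hℓ : 0 ≤ Real.logb 2 (R + 2) := Real.logb_nonneg one_lt_two (by linarith)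
  have hxδ : x ^ δ ≤ B * A ^ m * R * Real.logb 2 (R + 2) ^ m := by
    have := Real.logb_nonneg one_lt_two hx
    calc x ^ δ ≤ B * (A * Real.logb 2 (R + 2)) ^ m * R := by
          refine h.trans ?_
          gcongr
          exact hlog x R hx hR h
      _ = B * A ^ m * R * Real.logb 2 (R + 2) ^ m := by ring
  calc x ≤ (B * A ^ m * R * Real.logb 2 (R + 2) ^ m) ^ (1 / δ) := by
        rw [one_div]
        exact (Real.le_rpow_inv_iff_of_pos (by linarith) (by positivity) hδ).2 hxδ
    _ = (B * A ^ m) ^ (1 / δ) * R ^ (1 / δ) * Real.logb 2 (R + 2) ^ (m / δ) := by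
        rw [Real.mul_rpow (by positivity) (by positivity), Real.mul_rpow (by positivity)
          (by positivity), ← Real.rpow_natCast_mul hℓ, mul_one_div]

end LogarithmicInequality

section AverageDegree

variable {V W : Type*} [DecidableEq V] {G : SimpleGraph V} {H : SimpleGraph W}
  [DecidableRel H.Adj] {C₀ δ : ℝ} {r : ℕ} {X : Finset W}

theorem IsDensest.rpow_two_mul_card_le (hX : IsDensest H X) (hd : 0 < density H X)
    (D : DepthMinorRealization r G H) (h : HasSublinearSeparators G C₀ δ) (hC₀ : 0 < C₀)
    (hδ : 0 < δ) :
    (2 * #X : ℝ) ^ δ ≤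
      12 ^ δ * (196 * divisionConst C₀ δ) * Real.logb 2 (2 * #X) ^ 5 * (r + 1) := by
  have hM := divisionConst_pos hC₀ hδ
  have hcard : (0 : ℝ) < #X := by exact_mod_cast hX.nonempty.card_pos
  have hlog : (Nat.log 2 #X : ℝ) + 1 ≤ Real.logb 2 (2 * #X) := by
    rw [Real.logb_mul two_ne_zero hcard.ne', Real.logb_self_eq_one one_lt_two, add_comm]
    exact add_le_add_right (Real.natLog_le_logb _ _) 1
  calc (2 * #X : ℝ) ^ δ = 12 ^ δ * (#X / 6 : ℝ) ^ δ := by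
        rw [← Real.mul_rpow (by norm_num) (by positivity)]
        ring_nf
    _ ≤ 12 ^ δ * (196 * divisionConst C₀ δ * Real.logb 2 (2 * #X) ^ 5 * (r + 1)) := by
        grw [hX.rpow_card_le hd D h hC₀ hδ, hlog]
    _ = _ := by ring

end AverageDegree

universe u v

theorem hasSublinearSeparators_of_monotone {C₀ δ : ℝ}
    {C : ∀ (V : Type u) [Fintype V], SimpleGraph V → Prop}
    (hmono : ∀ (V W : Type u) [Fintype V] [Fintype W] (G : SimpleGraph V) (H : SimpleGraph W),
      C V G → IsSubgraphOf H G → C W H)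
    (hsep : ∀ (V : Type u) [Fintype V] [DecidableEq V] (G : SimpleGraph V), C V G →
      ∃ A B : Finset V, IsBalancedSeparator G A B ∧
        (#(A ∩ B) : ℝ) ≤ C₀ * (Fintype.card V : ℝ) ^ (1 - δ))
    {V : Type u} [Fintype V] [DecidableEq V] {G : SimpleGraph V} (hG : C V G) :
    HasSublinearSeparators G C₀ δ := by
  intro X
  have hind : C (X : Set V) (G.induce (X : Set V)) :=
    hmono V X G _ hG ⟨.subtype _, fun _ _ hadj => hadj⟩
  have hcard : Fintype.card (X : Set V) = #X := Fintype.card_coe X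
  simpa only [hcard] using hsep _ _ hind

theorem stmt_14_general (C₀ δ : ℝ) (hC₀ : 0 < C₀) (hδ : 0 < δ) :
    ∃ c₁ c₂ : ℝ, 0 < c₁ ∧ 0 < c₂ ∧
      ∀ (r : ℕ) (V : Type u) (W : Type v) [DecidableEq V] [Fintype W] [Nonempty W]
        (G : SimpleGraph V) (H : SimpleGraph W), HasSublinearSeparators G C₀ δ →
        DepthMinorRealization r G H →
        avgDeg H ≤ c₁ * ((r : ℝ) + 1) ^ (1 / δ) *
          ((1 / δ) * Real.logb 2 ((r : ℝ) + 3)) ^ (c₂ / δ) := by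
  classical
  have hM := divisionConst_pos hC₀ hδ
  obtain ⟨c, hc, hcard⟩ := exists_le_of_rpow_le_logb hδ
    (B := 12 ^ δ * (196 * divisionConst C₀ δ)) (by positivity) (m := 5) (by norm_num)
  -- `δ ^ (5 / δ)` cancels the factor `1 / δ` inside the power of the logarithm.
  refine ⟨c * δ ^ (5 / δ), 5, by positivity, by norm_num, fun r V W _ _ _ G H h D => ?_⟩
  have hlog : 0 ≤ Real.logb 2 ((r : ℝ) + 3) :=
    Real.logb_nonneg one_lt_two (by linarith [r.cast_nonneg (α := ℝ)])
  obtain ⟨X, hX⟩ := exists_isDensest H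
  have havg : avgDeg H ≤ 2 * density H X :=
    (avgDeg_le_two_mul_density_univ H).trans (by gcongr; exact hX.density_le univ)
  rcases le_or_gt (density H X) 0 with hd | hd
  · exact havg.trans ((by linarith : 2 * density H X ≤ 0).trans (by positivity))
  have hone : (1 : ℝ) ≤ #X := by exact_mod_cast hX.nonempty.card_pos
  calc avgDeg H ≤ 2 * #X := by linarith [density_le_card H X]
    _ ≤ c * ((r : ℝ) + 1) ^ (1 / δ) * Real.logb 2 (r + 1 + 2) ^ ((5 : ℕ) / δ) :=
        hcard _ _ (by linarith) (by simp) (hX.rpow_two_mul_card_le hd D h hC₀ hδ)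
    _ = c * δ ^ (5 / δ) * ((r : ℝ) + 1) ^ (1 / δ) *
          (1 / δ * Real.logb 2 (r + 3)) ^ (5 / δ) := by
        rw [Real.mul_rpow (by positivity) hlog, Real.div_rpow zero_le_one hδ.le, Real.one_rpow]
        field_simp
        norm_num [add_assoc]

/-- main theorem: if every `n`-vertex graph of a monotone class has a
balanced separator of order at most `C₀·n^(1-δ)`, then there are constants
`c₁, c₂` depending only on `C₀` and `δ` such that every depth-`r` minor of a graph
of the class has average degree at most
`c₁·(r+1)^(1/δ)·((1/δ)·log(r+3))^(c₂/δ)` (logs base 2). -/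
theorem stmt_14 (C₀ δ : ℝ) (hC₀ : 0 < C₀) (hδ0 : 0 < δ) (hδ1 : δ ≤ 1) :
    ∃ c₁ c₂ : ℝ, 0 < c₁ ∧ 0 < c₂ ∧
      ∀ (C : ∀ (V : Type) [Fintype V], SimpleGraph V → Prop),
        (∀ (V W : Type) [Fintype V] [Fintype W] (G : SimpleGraph V)
          (H : SimpleGraph W), C V G → IsSubgraphOf H G → C W H) →
        (∀ (V : Type) [Fintype V] [DecidableEq V] (G : SimpleGraph V), C V G →
          ∃ A B : Finset V, IsBalancedSeparator G A B ∧
            ((A ∩ B).card : ℝ) ≤ C₀ * (Fintype.card V : ℝ) ^ (1 - δ)) →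
        ∀ (r : ℕ) (V W : Type) [Fintype V] [Fintype W] [Nonempty W]
          (G : SimpleGraph V) (H : SimpleGraph W), C V G →
          DepthMinorRealization r G H →
          avgDeg H ≤ c₁ * ((r : ℝ) + 1) ^ (1 / δ) *
            ((1 / δ) * Real.logb 2 ((r : ℝ) + 3)) ^ (c₂ / δ) := by
  classical
  obtain ⟨c₁, c₂, hc₁, hc₂, hbound⟩ := stmt_14_general.{0, 0} C₀ δ hC₀ hδ0
  exact ⟨c₁, c₂, hc₁, hc₂, fun C hmono hsep r V W _ _ _ G H hG D =>
    hbound r V W G H (hasSublinearSeparators_of_monotone hmono hsep hG) D⟩
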